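/- Let α ∈ (0,1), let a : ℕ → ℝ satisfy 0 ≤ a i ≤ α^i for all i, and let ε > 0 satisfy ε²·(1 − α) < 2. Then there exists λ > 0 such that ∑'_{i : ℕ} a i / (λ + a i) ≤ 2·(log(2/(ε²(1−α)))/log(1/α) + 1) and λ · ∑'_{i : ℕ} a i / (λ + a i) ≤ ε². -/

import Mathlib

/-!
Each term of `K(lam) = ∑' i, a i / (lam + a i)` is at most `1` and at most `a i / lam`. Using the
first bound on a finite set `s` and the second off `s` gives `K(lam) ≤ #s + (∑' i ∉ s, a i) / lam`.
If `#s ≤ r` and the tail is at most `δ / 2`, then `lam = δ / (2 * r)` balances the two terms, so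
that `K(lam) ≤ 2 * r` and `lam * K(lam) ≤ δ`. Under geometric decay `a i ≤ C * α ^ i` the tail
beyond `N` is at most `C * α ^ N / (1 - α)`, which drops below `δ / 2` as soon as
`N ≥ logb α (δ * (1 - α) / (2 * C))`.
-/

open Finset Real

/-- The effective dimension `K(lam)`, at regularization level `lam`, of a covariance operator with
eigenvalues `a`. It is meaningful when the series converges, and is `0` otherwise. -/
noncomputable def effectiveDim {ι : Type*} (a : ι → ℝ) (lam : ℝ) : ℝ :=
  ∑' i, a i / (lam + a i)

section EffectiveDim

variable {ι : Type*} {a : ι → ℝ}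

theorem div_add_self_le_div {x lam : ℝ} (hx : 0 ≤ x) (hlam : 0 < lam) : x / (lam + x) ≤ x / lam :=
  div_le_div_of_nonneg_left hx hlam (le_add_of_nonneg_right hx)

theorem summable_div_add_self {lam : ℝ} (ha : ∀ i, 0 ≤ a i) (hsum : Summable a) (hlam : 0 < lam) :
    Summable fun i => a i / (lam + a i) :=
  (hsum.div_const lam).of_nonneg_of_le
    (fun i => div_nonneg (ha i) (add_nonneg hlam.le (ha i)))
    (fun i => div_add_self_le_div (ha i) hlam)

theorem effectiveDim_le_card_add_tsum_compl_div {lam : ℝ} (ha : ∀ i, 0 ≤ a i) (hsum : Summable a)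
    (hlam : 0 < lam) (s : Finset ι) :
    effectiveDim a lam ≤ #s + (∑' i : ↥(s : Set ι)ᶜ, a i) / lam := by
  have hsumK := summable_div_add_self ha hsum hlam
  have head : ∑ i ∈ s, a i / (lam + a i) ≤ #s := by
    have le_one (i : ι) : a i / (lam + a i) ≤ 1 :=
      div_le_one_of_le₀ (le_add_of_nonneg_left hlam.le) (add_nonneg hlam.le (ha i))
    simpa using sum_le_card_nsmul s _ 1 fun i _ => le_one i
  have tail : ∑' i : ↥(s : Set ι)ᶜ, a i / (lam + a i) ≤ (∑' i : ↥(s : Set ι)ᶜ, a i) / lam := by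
    rw [← tsum_div_const]
    exact (hsumK.subtype _).tsum_le_tsum (fun i => div_add_self_le_div (ha i) hlam)
      ((hsum.div_const lam).subtype _)
  calc effectiveDim a lam
      = ∑ i ∈ s, a i / (lam + a i) + ∑' i : ↥(s : Set ι)ᶜ, a i / (lam + a i) :=
        hsumK.sum_add_tsum_compl.symm
    _ ≤ #s + (∑' i : ↥(s : Set ι)ᶜ, a i) / lam := add_le_add head tail

theorem exists_effectiveDim_le_of_tsum_compl_le {s : Finset ι} {r δ : ℝ} (ha : ∀ i, 0 ≤ a i)
    (hsum : Summable a) (hr : 0 < r) (hδ : 0 < δ) (hcard : #s ≤ r)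
    (htail : ∑' i : ↥(s : Set ι)ᶜ, a i ≤ δ / 2) :
    ∃ lam, 0 < lam ∧ effectiveDim a lam ≤ 2 * r ∧ lam * effectiveDim a lam ≤ δ := by
  have hlam : 0 < δ / (2 * r) := by positivity
  have hK : effectiveDim a (δ / (2 * r)) ≤ 2 * r :=
    calc effectiveDim a (δ / (2 * r))
        ≤ #s + (∑' i : ↥(s : Set ι)ᶜ, a i) / (δ / (2 * r)) :=
          effectiveDim_le_card_add_tsum_compl_div ha hsum hlam s
      _ ≤ r + (δ / 2) / (δ / (2 * r)) := by gcongr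
      _ = 2 * r := by field_simp; ring
  have hlamK : δ / (2 * r) * effectiveDim a (δ / (2 * r)) ≤ δ :=
    calc δ / (2 * r) * effectiveDim a (δ / (2 * r))
        ≤ δ / (2 * r) * (2 * r) := by gcongr
      _ = δ := by field_simp
  exact ⟨δ / (2 * r), hlam, hK, hlamK⟩

end EffectiveDim

theorem tsum_compl_range {G : Type*} [AddCommGroup G] [TopologicalSpace G] [IsTopologicalAddGroup G]
    [T2Space G] {f : ℕ → G} (hf : Summable f) (N : ℕ) :
    ∑' i : ↥(range N : Set ℕ)ᶜ, f i = ∑' i, f (i + N) :=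
  add_left_cancel (hf.sum_add_tsum_compl.trans (hf.sum_add_tsum_nat_add N).symm)

theorem tsum_compl_range_le_of_le_geometric {f : ℕ → ℝ} {C α : ℝ} (hα₀ : 0 ≤ α) (hα₁ : α < 1)
    (hsum : Summable f) (hf : ∀ i, f i ≤ C * α ^ i) (N : ℕ) :
    ∑' i : ↥(range N : Set ℕ)ᶜ, f i ≤ C * α ^ N / (1 - α) := by
  have hgeom : HasSum (fun i => C * α ^ (i + N)) (C * α ^ N / (1 - α)) := by
    simp_rw [add_comm _ N, pow_add, ← mul_assoc, div_eq_mul_inv]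
    exact (hasSum_geometric_of_lt_one hα₀ hα₁).mul_left (C * α ^ N)
  rw [tsum_compl_range hsum]
  exact hasSum_le (fun i => hf (i + N)) ((summable_nat_add_iff N).2 hsum).hasSum hgeom

theorem pow_natCeil_logb_le {b x : ℝ} (hb₀ : 0 < b) (hb₁ : b < 1) (hx : 0 < x) :
    b ^ ⌈logb b x⌉₊ ≤ x := by
  rw [← rpow_natCast, ← logb_le_iff_le_rpow_of_base_lt_one hb₀ hb₁ hx]
  exact Nat.le_ceil _

theorem stmt_2_general {α C ε : ℝ} (hα : α ∈ Set.Ioo (0 : ℝ) 1) {a : ℕ → ℝ}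
    (ha : ∀ i, 0 ≤ a i ∧ a i ≤ C * α ^ i) (hε : 0 < ε) (hC : α * (ε ^ 2 * (1 - α)) < 2 * C) :
    ∃ lam, 0 < lam ∧
      effectiveDim a lam ≤ 2 * (log (2 * C / (ε ^ 2 * (1 - α))) / log (1 / α) + 1) ∧
      lam * effectiveDim a lam ≤ ε ^ 2 := by
  obtain ⟨hα₀, hα₁⟩ := hα
  have one_sub_pos : 0 < 1 - α := sub_pos.2 hα₁
  have C_pos : 0 < C := by linarith [mul_pos hα₀ (mul_pos (pow_pos hε 2) one_sub_pos)]
  have hsum : Summable a := ((summable_geometric_of_lt_one hα₀.le hα₁).mul_left C).of_nonneg_of_le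
    (fun i => (ha i).1) (fun i => (ha i).2)
  set x := ε ^ 2 * (1 - α) / (2 * C) with hx
  have x_pos : 0 < x := by positivity
  have ratio_eq_logb : log (2 * C / (ε ^ 2 * (1 - α))) / log (1 / α) = logb α x := by
    rw [log_div_log, one_div, logb_inv_base, ← logb_inv, inv_div]
  have neg_one_lt_logb : -1 < logb α x := by
    rwa [lt_logb_iff_rpow_lt_of_base_lt_one hα₀ hα₁ x_pos, rpow_neg_one, ← one_div,
      lt_div_iff₀' hα₀, hx, ← mul_div_assoc, div_lt_one (by positivity)]
  have tail_le : ∑' i : ↥(range ⌈logb α x⌉₊ : Set ℕ)ᶜ, a i ≤ ε ^ 2 / 2 :=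
    calc ∑' i : ↥(range ⌈logb α x⌉₊ : Set ℕ)ᶜ, a i
        ≤ C * α ^ ⌈logb α x⌉₊ / (1 - α) :=
          tsum_compl_range_le_of_le_geometric hα₀.le hα₁ hsum (fun i => (ha i).2) _
      _ ≤ C * x / (1 - α) := by gcongr; exact pow_natCeil_logb_le hα₀ hα₁ x_pos
      _ = ε ^ 2 / 2 := by rw [hx]; field_simp
  rw [ratio_eq_logb]
  refine exists_effectiveDim_le_of_tsum_compl_le (fun i => (ha i).1) hsum
    (neg_lt_iff_pos_add.1 neg_one_lt_logb) (by positivity) ?_ tail_le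
  simpa only [card_range] using (Nat.ceil_lt_add_one_of_gt_neg_one neg_one_lt_logb).le

/-- geometric-decay case of Proposition 3.1. -/
theorem stmt_2 (α : ℝ) (hα : α ∈ Set.Ioo (0 : ℝ) 1)
    (a : ℕ → ℝ) (ha : ∀ i, 0 ≤ a i ∧ a i ≤ α ^ i)
    (ε : ℝ) (hε : 0 < ε) (hε2 : ε ^ 2 * (1 - α) < 2) :
    ∃ lam : ℝ, 0 < lam ∧
      (∑' i, a i / (lam + a i)) ≤
        2 * (Real.log (2 / (ε ^ 2 * (1 - α))) / Real.log (1 / α) + 1) ∧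
      lam * ∑' i, a i / (lam + a i) ≤ ε ^ 2 := by
  have hC : α * (ε ^ 2 * (1 - α)) < 2 * 1 := by
    linarith [mul_le_of_le_one_left (mul_nonneg (sq_nonneg ε) (sub_nonneg.2 hα.2.le)) hα.2.le]
  simpa only [effectiveDim, mul_one] using
    stmt_2_general hα (by simpa only [one_mul] using ha) hε hC
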